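/- arXiv:2312.03778 — 2 statements merged into one kernel-verified Lean document; each statement's English description precedes it below -/
import Mathlib

section
/- Let H be an n×n contraction (H*H ≤ I) and let q ∈ [2,3]. Then the map (A, B) ↦ S_{H,q}(A | B) is jointly concave on pairs of n×n positive definite matrices: for positive definite A₁, A₂, B₁, B₂ and t ∈ [0,1], S_{H,q}(tA₁ + (1−t)A₂ | tB₁ + (1−t)B₂) ≥ t·S_{H,q}(A₁ | B₁) + (1−t)·S_{H,q}(A₂ | B₂). -/
open Matrix ComplexOrder

/-- Matrix logarithm of a (positive definite) Hermitian matrix, via functional calculus. -/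
noncomputable def mlog {n : ℕ} (A : Matrix (Fin n) (Fin n) ℂ) : Matrix (Fin n) (Fin n) ℂ :=
  cfc Real.log A

/-- Matrix exponential of a Hermitian matrix, via functional calculus. -/
noncomputable def mexp {n : ℕ} (A : Matrix (Fin n) (Fin n) ℂ) : Matrix (Fin n) (Fin n) ℂ :=
  cfc Real.exp A

/-- Real power of a (positive definite) Hermitian matrix, via functional calculus. -/
noncomputable def mpow {n : ℕ} (A : Matrix (Fin n) (Fin n) ℂ) (p : ℝ) : Matrix (Fin n) (Fin n) ℂ :=
  cfc (fun x : ℝ => x ^ p) A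

/-- Deformed logarithm `log_q x = (x^(q-1) - 1)/(q-1)`. -/
noncomputable def logq (q x : ℝ) : ℝ := (x ^ (q - 1) - 1) / (q - 1)

/-- Deformed exponential `exp_q x = (1 + (q-1)x)^(1/(q-1))`, with `exp_1 = exp`. -/
noncomputable def expq (q x : ℝ) : ℝ :=
  if q = 1 then Real.exp x else (1 + (q - 1) * x) ^ (1 / (q - 1))

/-- Deformed logarithm of a positive definite matrix, via functional calculus. -/
noncomputable def mlogq {n : ℕ} (q : ℝ) (A : Matrix (Fin n) (Fin n) ℂ) :
    Matrix (Fin n) (Fin n) ℂ :=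
  cfc (logq q) A

/-- Deformed exponential of a Hermitian matrix, via functional calculus. -/
noncomputable def mexpq {m : ℕ} (q : ℝ) (A : Matrix (Fin m) (Fin m) ℂ) :
    Matrix (Fin m) (Fin m) ℂ :=
  cfc (expq q) A

/-- Real part of the trace. -/
noncomputable def trRe {n : ℕ} (M : Matrix (Fin n) (Fin n) ℂ) : ℝ := (Matrix.trace M).re

/-- The reduced relative entropy `S_H(A | B) = Tr[A log A - H* A H log B - A + B]`. -/
noncomputable def SH {n : ℕ} (H A B : Matrix (Fin n) (Fin n) ℂ) : ℝ :=
  trRe (A * mlog A - Hᴴ * A * H * mlog B - A + B)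

/-- The reduced Tsallis relative entropy
`S_{H,q}(A | B) = Tr[A^(2-q) log_q A - H* A^(2-q) H log_q B - A + B]`. -/
noncomputable def STq {n : ℕ} (H : Matrix (Fin n) (Fin n) ℂ) (q : ℝ)
    (A B : Matrix (Fin n) (Fin n) ℂ) : ℝ :=
  trRe (mpow A (2 - q) * mlogq q A - Hᴴ * mpow A (2 - q) * H * mlogq q B - A + B)


/-- The matrix `U* H V`, where `U` and `V` are eigenvector matrices of `A` and `B`. -/
noncomputable def inEigenbases {n : ℕ} {A B : Matrix (Fin n) (Fin n) ℂ}
    (hA : A.IsHermitian) (hB : B.IsHermitian) (H : Matrix (Fin n) (Fin n) ℂ) :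
    Matrix (Fin n) (Fin n) ℂ :=
  (hA.eigenvectorUnitary.1)ᴴ * H * hB.eigenvectorUnitary.1

/-- In eigenbases `U` of `A` and `V` of `B`, the trace of `W* f(A) H g(B)` is a sum over
the entries of `U* W V` and `U* H V`. -/
theorem trace_mul_cfc_mul_cfc {n : ℕ} {A B : Matrix (Fin n) (Fin n) ℂ}
    (hA : A.IsHermitian) (hB : B.IsHermitian) (W H : Matrix (Fin n) (Fin n) ℂ) (f g : ℝ → ℝ) :
    trace (Wᴴ * cfc f A * H * cfc g B) =
      ∑ i, ∑ j,
        star (inEigenbases hA hB W i j) *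
        inEigenbases hA hB H i j *
        ((f (hA.eigenvalues i) * g (hB.eigenvalues j) : ℝ) : ℂ) := by
  rw [hA.cfc_eq, hB.cfc_eq, IsHermitian.cfc, IsHermitian.cfc, Unitary.conjStarAlgAut_apply,
    Unitary.conjStarAlgAut_apply]
  unfold inEigenbases
  set U := hA.eigenvectorUnitary.1
  set V := hB.eigenvectorUnitary.1
  set D := diagonal (RCLike.ofReal ∘ f ∘ hA.eigenvalues : Fin n → ℂ) with hD
  set E := diagonal (RCLike.ofReal ∘ g ∘ hB.eigenvalues : Fin n → ℂ) with hE
  have h : trace (Wᴴ * (U * D * star U) * H * (V * E * star V)) =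
      trace ((Uᴴ * W * V)ᴴ * (D * (Uᴴ * H * V) * E)) := by
    rw [← Matrix.mul_assoc _ (V * E) (star V), trace_mul_comm]
    simp only [star_eq_conjTranspose, conjTranspose_mul, conjTranspose_conjTranspose,
      Matrix.mul_assoc]
  rw [h, trace, Finset.sum_comm]
  refine Finset.sum_congr rfl fun j _ => ?_
  rw [diag_apply, mul_apply]
  refine Finset.sum_congr rfl fun i _ => ?_
  rw [hE, mul_diagonal, hD, diagonal_mul, conjTranspose_apply]
  simp only [Function.comp_apply, Complex.coe_algebraMap, Complex.ofReal_mul]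
  ring

/-- The diagonal case is a sum with nonnegative weights. -/
theorem re_trace_mul_cfc_mul_cfc {n : ℕ} {A B : Matrix (Fin n) (Fin n) ℂ}
    (hA : A.IsHermitian) (hB : B.IsHermitian) (H : Matrix (Fin n) (Fin n) ℂ) (f g : ℝ → ℝ) :
    (trace (Hᴴ * cfc f A * H * cfc g B)).re =
      ∑ i, ∑ j,
        Complex.normSq (inEigenbases hA hB H i j) *
        (f (hA.eigenvalues i) * g (hB.eigenvalues j)) := by
  rw [trace_mul_cfc_mul_cfc hA hB, Complex.re_sum]
  refine Finset.sum_congr rfl fun i _ => ?_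
  rw [Complex.re_sum]
  refine Finset.sum_congr rfl fun j _ => ?_
  rw [Complex.star_def, ← Complex.normSq_eq_conj_mul_self, ← Complex.ofReal_mul, Complex.ofReal_re]

/-- An affine functional of `(A, B)`, whose supremum over `W` is
`∑ |(U* H V) i j|² b_j² / (s a_i + b_j)`. -/
noncomputable def affineMinorant {n : ℕ} (H : Matrix (Fin n) (Fin n) ℂ) (s : ℝ)
    (W A B : Matrix (Fin n) (Fin n) ℂ) : ℝ :=
  2 * (trace (Wᴴ * H * B)).re - s * (trace (Wᴴ * A * W)).re - (trace (Wᴴ * W * B)).re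

theorem affineMinorant_convexCombination {n : ℕ} (H : Matrix (Fin n) (Fin n) ℂ) (s t : ℝ)
    (W A₁ A₂ B₁ B₂ : Matrix (Fin n) (Fin n) ℂ) :
    affineMinorant H s W (t • A₁ + (1 - t) • A₂) (t • B₁ + (1 - t) • B₂) =
      t * affineMinorant H s W A₁ B₁ + (1 - t) * affineMinorant H s W A₂ B₂ := by
  simp only [affineMinorant, Matrix.mul_add, Matrix.add_mul, Matrix.mul_smul, Matrix.smul_mul,
    trace_add, trace_smul, Complex.add_re, Complex.smul_re, smul_eq_mul]
  ring

theorem affineMinorant_eq_sum {n : ℕ} {A B : Matrix (Fin n) (Fin n) ℂ}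
    (hA : A.IsHermitian) (hB : B.IsHermitian) (H : Matrix (Fin n) (Fin n) ℂ) (s : ℝ)
    (W : Matrix (Fin n) (Fin n) ℂ) :
    affineMinorant H s W A B = ∑ i, ∑ j,
      (2 * (star (inEigenbases hA hB W i j) *
        inEigenbases hA hB H i j).re *
          hB.eigenvalues j -
        Complex.normSq (inEigenbases hA hB W i j) *
          (s * hA.eigenvalues i + hB.eigenvalues j)) := by
  have h₁ := congrArg Complex.re (trace_mul_cfc_mul_cfc hA hB W H (fun _ => 1) id)
  have h₂ := re_trace_mul_cfc_mul_cfc hA hB W id (fun _ => 1)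
  have h₃ := re_trace_mul_cfc_mul_cfc hA hB W (fun _ => 1) id
  simp only [cfc_const_one ℝ A hA.isSelfAdjoint, cfc_const_one ℝ B hB.isSelfAdjoint,
    cfc_id ℝ A hA.isSelfAdjoint, cfc_id ℝ B hB.isSelfAdjoint, id, one_mul,
    mul_one, Complex.re_sum, Complex.re_mul_ofReal] at h₁ h₂ h₃
  rw [affineMinorant, h₁, h₂, h₃]
  simp only [Finset.mul_sum, ← Finset.sum_sub_distrib]
  refine Finset.sum_congr rfl fun i _ => Finset.sum_congr rfl fun j _ => ?_
  ring

/-- The spectral sum `∑ |(U* H V) i j|² b_j² / (s a_i + b_j)`. -/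
noncomputable def resolventSum {n : ℕ} {A B : Matrix (Fin n) (Fin n) ℂ}
    (hA : A.IsHermitian) (hB : B.IsHermitian) (H : Matrix (Fin n) (Fin n) ℂ) (s : ℝ) : ℝ :=
  ∑ i, ∑ j,
    Complex.normSq (inEigenbases hA hB H i j) *
    (hB.eigenvalues j ^ 2 / (s * hA.eigenvalues i + hB.eigenvalues j))

theorem affineMinorant_le_resolventSum {n : ℕ} {A B : Matrix (Fin n) (Fin n) ℂ}
    (hA : A.PosDef) (hB : B.PosDef) (H W : Matrix (Fin n) (Fin n) ℂ) {s : ℝ} (hs : 0 < s) :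
    affineMinorant H s W A B ≤ resolventSum hA.isHermitian hB.isHermitian H s := by
  rw [affineMinorant_eq_sum hA.isHermitian hB.isHermitian, resolventSum]
  refine Finset.sum_le_sum fun i _ => Finset.sum_le_sum fun j _ => ?_
  have ha := hA.eigenvalues_pos i
  have hb := hB.eigenvalues_pos j
  generalize hA.isHermitian.eigenvalues i = a at *
  generalize hB.isHermitian.eigenvalues j = b at *
  generalize inEigenbases _ _ W i j = w
  generalize inEigenbases _ _ H i j = h
  have hc : 0 < s * a + b := by positivity
  rw [← mul_div_assoc, le_div_iff₀ hc]
  simp only [Complex.normSq_apply, Complex.star_def, Complex.mul_re, Complex.conj_re,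
    Complex.conj_im]
  nlinarith [sq_nonneg (w.re * (s * a + b) - h.re * b), sq_nonneg (w.im * (s * a + b) - h.im * b)]

theorem exists_affineMinorant_eq_resolventSum {n : ℕ} {A B : Matrix (Fin n) (Fin n) ℂ}
    (hA : A.PosDef) (hB : B.PosDef) (H : Matrix (Fin n) (Fin n) ℂ) {s : ℝ} (hs : 0 < s) :
    ∃ W, affineMinorant H s W A B = resolventSum hA.isHermitian hB.isHermitian H s := by
  let U := hA.isHermitian.eigenvectorUnitary.1
  let V := hB.isHermitian.eigenvectorUnitary.1
  let a := hA.isHermitian.eigenvalues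
  let b := hB.isHermitian.eigenvalues
  let X : Matrix (Fin n) (Fin n) ℂ :=
    of fun i j => (Uᴴ * H * V) i j * ((b j / (s * a i + b j) : ℝ) : ℂ)
  have hU : Uᴴ * U = 1 := Unitary.coe_star_mul_self hA.isHermitian.eigenvectorUnitary
  have hV : Vᴴ * V = 1 := Unitary.coe_star_mul_self hB.isHermitian.eigenvectorUnitary
  have hX : inEigenbases hA.isHermitian hB.isHermitian (U * X * Vᴴ) = X := by
    change Uᴴ * (U * X * Vᴴ) * V = X
    rw [Matrix.mul_assoc, Matrix.mul_assoc _ Vᴴ, hV, Matrix.mul_one, ← Matrix.mul_assoc, hU,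
      Matrix.one_mul]
  refine ⟨U * X * Vᴴ, ?_⟩
  rw [affineMinorant_eq_sum hA.isHermitian hB.isHermitian, hX, resolventSum]
  refine Finset.sum_congr rfl fun i _ => Finset.sum_congr rfl fun j _ => ?_
  have ha : 0 < a i := hA.eigenvalues_pos i
  have hb : 0 < b j := hB.eigenvalues_pos j
  change 2 * (star (X i j) * (Uᴴ * H * V) i j).re * b j - Complex.normSq (X i j) * (s * a i + b j) =
    Complex.normSq ((Uᴴ * H * V) i j) * (b j ^ 2 / (s * a i + b j))
  simp only [X, of_apply]
  generalize (Uᴴ * H * V) i j = h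
  generalize a i = a at *
  generalize b j = b at *
  have hc : s * a + b ≠ 0 := by positivity
  simp only [Complex.normSq_apply, Complex.star_def, Complex.mul_re, Complex.mul_im,
    Complex.conj_re, Complex.conj_im, Complex.ofReal_re, Complex.ofReal_im]
  field_simp
  ring

theorem resolventSum_convex {n : ℕ} {A₁ A₂ B₁ B₂ : Matrix (Fin n) (Fin n) ℂ}
    (hA₁ : A₁.PosDef) (hA₂ : A₂.PosDef) (hB₁ : B₁.PosDef) (hB₂ : B₂.PosDef) {t : ℝ}
    (ht : t ∈ Set.Icc (0 : ℝ) 1)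
    (hA : (t • A₁ + (1 - t) • A₂).PosDef) (hB : (t • B₁ + (1 - t) • B₂).PosDef)
    (H : Matrix (Fin n) (Fin n) ℂ) {s : ℝ} (hs : 0 < s) :
    resolventSum hA.isHermitian hB.isHermitian H s ≤
      t * resolventSum hA₁.isHermitian hB₁.isHermitian H s +
        (1 - t) * resolventSum hA₂.isHermitian hB₂.isHermitian H s := by
  obtain ⟨W, hW⟩ := exists_affineMinorant_eq_resolventSum hA hB H hs
  rw [← hW, affineMinorant_convexCombination]
  exact add_le_add
    (mul_le_mul_of_nonneg_left (affineMinorant_le_resolventSum hA₁ hB₁ H W hs) ht.1)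
    (mul_le_mul_of_nonneg_left (affineMinorant_le_resolventSum hA₂ hB₂ H W hs)
      (sub_nonneg.2 ht.2))

theorem mul_rpowIntegrand_div {a b s p : ℝ} (ha : 0 < a) (hb : 0 < b) (hs : 0 < s)
    (hp : p ∈ Set.Ioo (0 : ℝ) 1) :
    b * Real.rpowIntegrand₀₁ p s (b / a) = s ^ (p - 1) * (b ^ 2 / (s * a + b)) := by
  rw [Real.rpowIntegrand₀₁_eq_pow_div hp hs.le (by positivity)]
  field_simp

theorem rpow_neg_mul_rpow_one_add {a b p : ℝ} (ha : 0 < a) (hb : 0 < b) :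
    a ^ (-p) * b ^ (1 + p) = b * (b / a) ^ p := by
  rw [Real.div_rpow hb.le ha.le, Real.rpow_neg ha.le, Real.rpow_add hb, Real.rpow_one]
  ring

theorem exists_measure_trRe_eq_integral {p : ℝ} (hp : p ∈ Set.Ioo (0 : ℝ) 1) :
    ∃ μ : MeasureTheory.Measure ℝ, ∀ (n : ℕ) (A B H : Matrix (Fin n) (Fin n) ℂ)
      (hA : A.PosDef) (hB : B.PosDef),
      MeasureTheory.IntegrableOn
        (fun s => s ^ (p - 1) * resolventSum hA.isHermitian hB.isHermitian H s) (Set.Ioi 0) μ ∧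
      trRe (Hᴴ * mpow A (-p) * H * mpow B (1 + p)) =
        ∫ s in Set.Ioi 0, s ^ (p - 1) * resolventSum hA.isHermitian hB.isHermitian H s ∂μ := by
  obtain ⟨μ, hμ⟩ := Real.exists_measure_rpow_eq_integral_rpowIntegrand₀₁ hp
  refine ⟨μ, fun n A B H hA hB => ?_⟩
  let a := hA.isHermitian.eigenvalues
  let b := hB.isHermitian.eigenvalues
  let N := fun i j => Complex.normSq (inEigenbases hA.isHermitian hB.isHermitian H i j)
  have ha : ∀ i, 0 < a i := hA.eigenvalues_pos
  have hb : ∀ j, 0 < b j := hB.eigenvalues_pos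
  have hx : ∀ i j, b j / a i ∈ Set.Ici (0 : ℝ) := fun i j => (div_pos (hb j) (ha i)).le
  have hEq : Set.EqOn
      (fun s => ∑ i, ∑ j, N i j * (b j * Real.rpowIntegrand₀₁ p s (b j / a i)))
      (fun s => s ^ (p - 1) * resolventSum hA.isHermitian hB.isHermitian H s) (Set.Ioi 0) := by
    intro s hs
    simp only [resolventSum, Finset.mul_sum]
    refine Finset.sum_congr rfl fun i _ => Finset.sum_congr rfl fun j _ => ?_
    rw [mul_rpowIntegrand_div (ha i) (hb j) hs hp, mul_left_comm]
  have hint : ∀ i j, MeasureTheory.IntegrableOn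
      (fun s => N i j * (b j * Real.rpowIntegrand₀₁ p s (b j / a i))) (Set.Ioi 0) μ :=
    fun i j => ((hμ _ (hx i j)).1.const_mul _).const_mul _
  refine ⟨MeasureTheory.IntegrableOn.congr_fun
    (MeasureTheory.integrable_finsetSum _ fun i _ =>
      MeasureTheory.integrable_finsetSum _ fun j _ => hint i j) hEq measurableSet_Ioi, ?_⟩
  rw [← MeasureTheory.setIntegral_congr_fun measurableSet_Ioi hEq, MeasureTheory.integral_finsetSum
    _ fun i _ => MeasureTheory.integrable_finsetSum _ fun j _ => hint i j, trRe, mpow, mpow,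
    re_trace_mul_cfc_mul_cfc hA.isHermitian hB.isHermitian]
  refine Finset.sum_congr rfl fun i _ => ?_
  rw [MeasureTheory.integral_finsetSum _ fun j _ => hint i j]
  refine Finset.sum_congr rfl fun j _ => ?_
  rw [MeasureTheory.integral_const_mul, MeasureTheory.integral_const_mul, ← (hμ _ (hx i j)).2,
    rpow_neg_mul_rpow_one_add (ha i) (hb j)]

theorem continuous_trRe_mpow_mul_mpow {n : ℕ} {A B : Matrix (Fin n) (Fin n) ℂ}
    (hA : A.PosDef) (hB : B.PosDef) (H : Matrix (Fin n) (Fin n) ℂ) :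
    Continuous fun p : ℝ => trRe (Hᴴ * mpow A (-p) * H * mpow B (1 + p)) := by
  simp only [trRe, mpow, re_trace_mul_cfc_mul_cfc hA.isHermitian hB.isHermitian]
  refine continuous_finsetSum _ fun i _ => continuous_finsetSum _ fun j _ => ?_
  exact continuous_const.mul
    ((continuous_const.rpow continuous_neg fun _ => .inl (hA.eigenvalues_pos i).ne').mul
      (continuous_const.rpow (continuous_const.add continuous_id) fun _ =>
        .inl (hB.eigenvalues_pos j).ne'))

theorem posDef_convexCombination {n : ℕ} {A₁ A₂ : Matrix (Fin n) (Fin n) ℂ}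
    (hA₁ : A₁.PosDef) (hA₂ : A₂.PosDef) {t : ℝ} (ht : t ∈ Set.Icc (0 : ℝ) 1) :
    (t • A₁ + (1 - t) • A₂).PosDef := by
  rcases ht.1.eq_or_lt with rfl | h
  · simpa using hA₂
  · exact (hA₁.smul h).add_posSemidef (hA₂.posSemidef.smul (sub_nonneg.2 ht.2))

/-- **Ando's convexity theorem**: `(A, B) ↦ Tr[H* A^(-p) H B^(1+p)]` is jointly convex for
`p ∈ [0, 1]`. -/
theorem trRe_mpow_neg_mul_mpow_one_add_convex {n : ℕ} {A₁ A₂ B₁ B₂ : Matrix (Fin n) (Fin n) ℂ}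
    (hA₁ : A₁.PosDef) (hA₂ : A₂.PosDef) (hB₁ : B₁.PosDef) (hB₂ : B₂.PosDef) {t : ℝ}
    (ht : t ∈ Set.Icc (0 : ℝ) 1) (H : Matrix (Fin n) (Fin n) ℂ) {p : ℝ}
    (hp : p ∈ Set.Icc (0 : ℝ) 1) :
    trRe (Hᴴ * mpow (t • A₁ + (1 - t) • A₂) (-p) * H * mpow (t • B₁ + (1 - t) • B₂) (1 + p)) ≤
      t * trRe (Hᴴ * mpow A₁ (-p) * H * mpow B₁ (1 + p)) +
        (1 - t) * trRe (Hᴴ * mpow A₂ (-p) * H * mpow B₂ (1 + p)) := by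
  have hA := posDef_convexCombination hA₁ hA₂ ht
  have hB := posDef_convexCombination hB₁ hB₂ ht
  rw [← closure_Ioo zero_ne_one] at hp
  refine le_on_closure (fun r hr => ?_) (continuous_trRe_mpow_mul_mpow hA hB H).continuousOn
    ((continuous_const.mul (continuous_trRe_mpow_mul_mpow hA₁ hB₁ H)).add
      (continuous_const.mul (continuous_trRe_mpow_mul_mpow hA₂ hB₂ H))).continuousOn hp
  obtain ⟨μ, hμ⟩ := exists_measure_trRe_eq_integral hr
  obtain ⟨hi, he⟩ := hμ n _ _ H hA hB
  obtain ⟨hi₁, he₁⟩ := hμ n _ _ H hA₁ hB₁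
  obtain ⟨hi₂, he₂⟩ := hμ n _ _ H hA₂ hB₂
  simp only [Pi.add_apply, Pi.mul_apply, he, he₁, he₂]
  rw [← MeasureTheory.integral_const_mul, ← MeasureTheory.integral_const_mul,
    ← MeasureTheory.integral_add (hi₁.const_mul t) (hi₂.const_mul (1 - t))]
  refine MeasureTheory.setIntegral_mono_on hi ((hi₁.const_mul t).add (hi₂.const_mul (1 - t)))
    measurableSet_Ioi fun s hs => ?_
  have h := mul_le_mul_of_nonneg_left (resolventSum_convex hA₁ hA₂ hB₁ hB₂ ht hA hB H hs)
    (Real.rpow_nonneg (le_of_lt hs) (r - 1))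
  linarith

theorem posSemidef_one_sub_mul_conjTranspose {n : ℕ} {H : Matrix (Fin n) (Fin n) ℂ}
    (hH : (1 - Hᴴ * H).PosSemidef) : (1 - H * Hᴴ).PosSemidef := by
  let _ : Invertible (1 : Matrix (Fin n) (Fin n) ℂ) := invertibleOne
  have h := (PosDef.fromBlocks₁₁ H 1 (PosDef.one (n := Fin n) (R := ℂ))).2 (by simpa using hH)
  simpa using (PosDef.fromBlocks₂₂ 1 H (PosDef.one (n := Fin n) (R := ℂ))).1 h

theorem exists_mul_conjTranspose_eq_one_sub {n : ℕ} {H : Matrix (Fin n) (Fin n) ℂ}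
    (hH : (1 - Hᴴ * H).PosSemidef) : ∃ K : Matrix (Fin n) (Fin n) ℂ, K * Kᴴ = 1 - H * Hᴴ := by
  open scoped MatrixOrder in
  obtain ⟨K, hK⟩ := CStarAlgebra.nonneg_iff_eq_mul_star_self.1
    (posSemidef_one_sub_mul_conjTranspose hH).nonneg
  exact ⟨K, hK.symm⟩

theorem mlogq_eq {n : ℕ} (A : Matrix (Fin n) (Fin n) ℂ) (hA : A.IsHermitian) (q : ℝ) :
    mlogq q A = (q - 1)⁻¹ • (mpow A (q - 1) - 1) := by
  have hc : ∀ f : ℝ → ℝ, ContinuousOn f (spectrum ℝ A) := fun f =>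
    A.finite_real_spectrum.continuousOn f
  have h : logq q = fun x => (q - 1)⁻¹ * (x ^ (q - 1) - 1) := by
    funext x
    rw [logq, div_eq_inv_mul]
  rw [mlogq, h, cfc_const_mul _ _ _ (hc _), cfc_sub _ _ _ (hc _) (hc _),
    cfc_const_one ℝ A hA.isSelfAdjoint, mpow]

theorem mpow_mul_mpow_of_add_eq_one {n : ℕ} {A : Matrix (Fin n) (Fin n) ℂ} (hA : A.PosDef)
    {r s : ℝ} (h : r + s = 1) : mpow A r * mpow A s = A := by
  rw [mpow, mpow, ← cfc_mul _ _ _ (A.finite_real_spectrum.continuousOn _)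
    (A.finite_real_spectrum.continuousOn _)]
  conv_rhs => rw [← cfc_id ℝ A hA.isHermitian.isSelfAdjoint]
  refine cfc_congr fun x hx => ?_
  rw [hA.isHermitian.spectrum_real_eq_range_eigenvalues] at hx
  obtain ⟨i, rfl⟩ := hx
  simp only [← Real.rpow_add (hA.eigenvalues_pos i), h, Real.rpow_one, id]

/-- The reduced Tsallis relative entropy as a linear functional minus two convex trace
functions. -/
theorem STq_eq {n : ℕ} {H K A B : Matrix (Fin n) (Fin n) ℂ} (hK : K * Kᴴ = 1 - H * Hᴴ)
    (hA : A.PosDef) (hB : B.PosDef) (q : ℝ) :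
    STq H q A B = (q - 1)⁻¹ * (trRe A - trRe (Kᴴ * mpow A (2 - q) * K)
      - trRe (Hᴴ * mpow A (2 - q) * H * mpow B (q - 1))) - trRe A + trRe B := by
  have hK' : trace (Kᴴ * mpow A (2 - q) * K) =
      trace (mpow A (2 - q)) - trace (Hᴴ * mpow A (2 - q) * H) := by
    rw [trace_mul_cycle, hK, Matrix.sub_mul, Matrix.one_mul, trace_sub, ← trace_mul_cycle]
  simp only [STq, trRe, mlogq_eq A hA.isHermitian, mlogq_eq B hB.isHermitian, hK', Matrix.mul_smul,
    Matrix.mul_sub, Matrix.mul_one, mpow_mul_mpow_of_add_eq_one hA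
      (show 2 - q + (q - 1) = 1 by ring),
    trace_add, trace_sub, trace_smul, Complex.add_re, Complex.sub_re, Complex.smul_re, smul_eq_mul]
  ring

/-- Joint concavity of the reduced Tsallis relative entropy for q ∈ [2,3]. -/
theorem stmt5 {n : ℕ} (H : Matrix (Fin n) (Fin n) ℂ) (hH : (1 - Hᴴ * H).PosSemidef)
    (q : ℝ) (hq : q ∈ Set.Icc (2 : ℝ) 3)
    (A₁ A₂ B₁ B₂ : Matrix (Fin n) (Fin n) ℂ)
    (hA₁ : A₁.PosDef) (hA₂ : A₂.PosDef) (hB₁ : B₁.PosDef) (hB₂ : B₂.PosDef)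
    (t : ℝ) (ht : t ∈ Set.Icc (0 : ℝ) 1) :
    STq H q (t • A₁ + (1 - t) • A₂) (t • B₁ + (1 - t) • B₂)
      ≥ t * STq H q A₁ B₁ + (1 - t) * STq H q A₂ B₂ := by
  obtain ⟨K, hK⟩ := exists_mul_conjTranspose_eq_one_sub hH
  have hp : q - 2 ∈ Set.Icc (0 : ℝ) 1 := ⟨by linarith [hq.1], by linarith [hq.2]⟩
  have h := trRe_mpow_neg_mul_mpow_one_add_convex hA₁ hA₂ hB₁ hB₂ ht H hp
  have h' := trRe_mpow_neg_mul_mpow_one_add_convex hA₁ hA₂ PosDef.one PosDef.one ht K hp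
  have hone : mpow (1 : Matrix (Fin n) (Fin n) ℂ) (1 + (q - 2)) = 1 := by simp [mpow, cfc_apply_one]
  rw [← add_smul, add_sub_cancel, one_smul, hone] at h'
  rw [show -(q - 2) = 2 - q by ring] at h h'
  rw [show 1 + (q - 2) = q - 1 by ring] at h
  simp only [Matrix.mul_one] at h'
  have hlin : ∀ X Y : Matrix (Fin n) (Fin n) ℂ,
      trRe (t • X + (1 - t) • Y) = t * trRe X + (1 - t) * trRe Y := fun X Y => by
    simp [trRe, trace_add, trace_smul]
  rw [STq_eq hK (posDef_convexCombination hA₁ hA₂ ht) (posDef_convexCombination hB₁ hB₂ ht),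
    STq_eq hK hA₁ hB₁, STq_eq hK hA₂ hB₂, hlin, hlin]
  have hq' : 0 ≤ (q - 1)⁻¹ := inv_nonneg.2 (by linarith [hq.1])
  linarith [mul_le_mul_of_nonneg_left (add_le_add h h') hq']
end

section
/- Let q ∈ (1,2], let H be an n×n contraction (H*H ≤ I), and let L be an n×n Hermitian matrix with I − H*H + (q−1)L ≥ 0. Then the trace function φ_q(A) = Tr[(I − H*H + (q−1)L + H* A^{q−1} H)^{1/(q−1)}] is concave on n×n positive definite matrices: for positive definite A₁, A₂ and t ∈ [0,1], φ_q(tA₁ + (1−t)A₂) ≥ t·φ_q(A₁) + (1−t)·φ_q(A₂). -/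
open Matrix ComplexOrder

/-- The trace functional φ_q(A) = Tr[(I - H*H + (q-1)L + H* A^(q-1) H)^(1/(q-1))]. -/
noncomputable def phiq {n : ℕ} (q : ℝ) (H L A : Matrix (Fin n) (Fin n) ℂ) : ℝ :=
  trRe (mpow (1 - Hᴴ * H + (q - 1) • L + Hᴴ * mpow A (q - 1) * H) (1 / (q - 1)))

open MeasureTheory

/-- The matrix of `K` in the eigenbases of the Hermitian matrices `A` (rows) and `B` (columns). -/
noncomputable def eigenbasisMatrix {n : ℕ} {A B : Matrix (Fin n) (Fin n) ℂ}
    (hA : A.IsHermitian) (hB : B.IsHermitian) (K : Matrix (Fin n) (Fin n) ℂ) :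
    Matrix (Fin n) (Fin n) ℂ :=
  star (hA.eigenvectorUnitary : Matrix (Fin n) (Fin n) ℂ) * K * hB.eigenvectorUnitary

theorem eigenbasisMatrix_sub {n : ℕ} {A B : Matrix (Fin n) (Fin n) ℂ}
    (hA : A.IsHermitian) (hB : B.IsHermitian) (K Z : Matrix (Fin n) (Fin n) ℂ) :
    eigenbasisMatrix hA hB (K - Z) = eigenbasisMatrix hA hB K - eigenbasisMatrix hA hB Z := by
  simp only [eigenbasisMatrix, mul_sub, sub_mul]

theorem exists_eigenbasisMatrix_eq {n : ℕ} {A B : Matrix (Fin n) (Fin n) ℂ}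
    (hA : A.IsHermitian) (hB : B.IsHermitian) (M : Matrix (Fin n) (Fin n) ℂ) :
    ∃ Z, eigenbasisMatrix hA hB Z = M := by
  refine ⟨hA.eigenvectorUnitary * M * star (hB.eigenvectorUnitary : Matrix (Fin n) (Fin n) ℂ), ?_⟩
  have hU := Unitary.coe_star_mul_self hA.eigenvectorUnitary
  have hV := Unitary.coe_star_mul_self hB.eigenvectorUnitary
  rw [eigenbasisMatrix]
  simp only [mul_assoc] at hU hV ⊢
  rw [hV, mul_one, ← mul_assoc, hU, one_mul]

theorem trRe_conjTranspose_cfc_mul_cfc {n : ℕ} {A B : Matrix (Fin n) (Fin n) ℂ}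
    (hA : A.IsHermitian) (hB : B.IsHermitian) (K : Matrix (Fin n) (Fin n) ℂ) (f g : ℝ → ℝ) :
    trRe (Kᴴ * cfc f A * K * cfc g B) =
      ∑ i, ∑ j, Complex.normSq (eigenbasisMatrix hA hB K i j) *
        (f (hA.eigenvalues i) * g (hB.eigenvalues j)) := by
  have key : (Kᴴ * cfc f A * K * cfc g B).trace =
      ((eigenbasisMatrix hA hB K)ᴴ * diagonal (fun i => (f (hA.eigenvalues i) : ℂ)) *
        eigenbasisMatrix hA hB K * diagonal (fun j => (g (hB.eigenvalues j) : ℂ))).trace := by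
    rw [hA.cfc_eq, hB.cfc_eq, IsHermitian.cfc, IsHermitian.cfc, Unitary.conjStarAlgAut_apply,
      Unitary.conjStarAlgAut_apply, eigenbasisMatrix]
    simp only [← mul_assoc]
    rw [trace_mul_comm]
    simp only [conjTranspose_mul, star_eq_conjTranspose, conjTranspose_conjTranspose, mul_assoc]
    rfl
  rw [trRe, key, trace, Complex.re_sum, Finset.sum_comm]
  refine Finset.sum_congr rfl fun j _ => ?_
  rw [diag_apply, mul_diagonal, mul_apply, Finset.sum_mul, Complex.re_sum]
  refine Finset.sum_congr rfl fun i _ => ?_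
  rw [mul_diagonal, conjTranspose_apply]
  simp [Complex.normSq_apply]
  ring

/-- Pointwise form of the parallel sum as a minimum of quadratic functions. -/
theorem normSq_mul_parallel_le {a b t : ℝ} (ha : 0 ≤ a) (hb : 0 ≤ b) (ht : 0 < t) (k z : ℂ) :
    Complex.normSq k * (a * b / (a + t * b)) ≤
      t⁻¹ * (Complex.normSq z * a) + Complex.normSq (k - z) * b := by
  have htb : 0 ≤ t * b := by positivity
  rcases (add_nonneg ha htb).eq_or_lt with h | h
  · rw [← h, div_zero, mul_zero]
    have := Complex.normSq_nonneg z
    have := Complex.normSq_nonneg (k - z)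
    positivity
  · have : t⁻¹ * (Complex.normSq z * a) + Complex.normSq (k - z) * b -
        Complex.normSq k * (a * b / (a + t * b)) =
        Complex.normSq ((a + t * b : ℝ) * z - (t * b : ℝ) * k) / (t * (a + t * b)) := by
      simp only [Complex.normSq_apply, Complex.sub_re, Complex.sub_im, Complex.re_ofReal_mul,
        Complex.im_ofReal_mul]
      field_simp
      ring
    rw [← sub_nonneg, this]
    have := Complex.normSq_nonneg ((a + t * b : ℝ) * z - (t * b : ℝ) * k)
    positivity

theorem normSq_mul_parallel_eq {a b t : ℝ} (ha : 0 ≤ a) (hb : 0 ≤ b) (ht : 0 < t) (k : ℂ) :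
    Complex.normSq k * (a * b / (a + t * b)) =
      t⁻¹ * (Complex.normSq ((t * b / (a + t * b) : ℝ) * k) * a) +
        Complex.normSq (k - (t * b / (a + t * b) : ℝ) * k) * b := by
  have htb : 0 ≤ t * b := by positivity
  rcases (add_nonneg ha htb).eq_or_lt with h | h
  · have : b = 0 := by
      have : t * b = 0 := by linarith
      exact (mul_eq_zero.mp this).resolve_left ht.ne'
    simp [this]
  · have hk : k - (t * b / (a + t * b) : ℝ) * k = (a / (a + t * b) : ℝ) * k := by
      have : a / (a + t * b) = 1 - t * b / (a + t * b) := by field_simp; ring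
      rw [this]
      push_cast
      ring
    rw [hk, Complex.normSq_mul, Complex.normSq_mul, Complex.normSq_ofReal, Complex.normSq_ofReal]
    generalize hd : a + t * b = d at h
    field_simp
    rw [← hd]
    ring

/-- The quadratic form of the parallel sum of left multiplication by `A` and right
multiplication by `B` (with parameter `t`), evaluated at `K`. -/
noncomputable def parallelForm {n : ℕ} {A B : Matrix (Fin n) (Fin n) ℂ}
    (hA : A.IsHermitian) (hB : B.IsHermitian) (K : Matrix (Fin n) (Fin n) ℂ) (t : ℝ) : ℝ :=
  ∑ i, ∑ j, Complex.normSq (eigenbasisMatrix hA hB K i j) *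
    (hA.eigenvalues i * hB.eigenvalues j / (hA.eigenvalues i + t * hB.eigenvalues j))

theorem quadratic_eq_sum {n : ℕ} {A B : Matrix (Fin n) (Fin n) ℂ}
    (hA : A.IsHermitian) (hB : B.IsHermitian) (K Z : Matrix (Fin n) (Fin n) ℂ) (t : ℝ) :
    t⁻¹ * trRe (Zᴴ * A * Z) + trRe ((K - Z)ᴴ * (K - Z) * B) =
      ∑ i, ∑ j, (t⁻¹ * (Complex.normSq (eigenbasisMatrix hA hB Z i j) * hA.eigenvalues i) +
        Complex.normSq (eigenbasisMatrix hA hB K i j - eigenbasisMatrix hA hB Z i j) *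
          hB.eigenvalues j) := by
  have h₁ := trRe_conjTranspose_cfc_mul_cfc hA hB Z (fun x => x) (fun _ => 1)
  have h₂ := trRe_conjTranspose_cfc_mul_cfc hA hB (K - Z) (fun _ => 1) (fun x => x)
  have hA' : IsSelfAdjoint A := hA
  have hB' : IsSelfAdjoint B := hB
  rw [cfc_id' ℝ A, cfc_const_one ℝ B, mul_one] at h₁
  rw [cfc_id' ℝ B, cfc_const_one ℝ A, mul_one] at h₂
  rw [h₁, h₂]
  simp only [Finset.sum_add_distrib, Finset.mul_sum, mul_one, one_mul, eigenbasisMatrix_sub,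
    Matrix.sub_apply]

theorem parallelForm_le {n : ℕ} {A B : Matrix (Fin n) (Fin n) ℂ}
    (hA : A.PosSemidef) (hB : B.PosSemidef) (K Z : Matrix (Fin n) (Fin n) ℂ) {t : ℝ}
    (ht : 0 < t) :
    parallelForm hA.1 hB.1 K t ≤ t⁻¹ * trRe (Zᴴ * A * Z) + trRe ((K - Z)ᴴ * (K - Z) * B) := by
  rw [quadratic_eq_sum hA.1 hB.1]
  exact Finset.sum_le_sum fun i _ => Finset.sum_le_sum fun j _ =>
    normSq_mul_parallel_le (hA.eigenvalues_nonneg i) (hB.eigenvalues_nonneg j) ht _ _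

theorem exists_parallelForm_eq {n : ℕ} {A B : Matrix (Fin n) (Fin n) ℂ}
    (hA : A.PosSemidef) (hB : B.PosSemidef) (K : Matrix (Fin n) (Fin n) ℂ) {t : ℝ}
    (ht : 0 < t) :
    ∃ Z, parallelForm hA.1 hB.1 K t =
      t⁻¹ * trRe (Zᴴ * A * Z) + trRe ((K - Z)ᴴ * (K - Z) * B) := by
  obtain ⟨Z, hZ⟩ := exists_eigenbasisMatrix_eq hA.1 hB.1 (Matrix.of fun i j =>
    ((t * hB.1.eigenvalues j / (hA.1.eigenvalues i + t * hB.1.eigenvalues j) : ℝ) : ℂ) *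
      eigenbasisMatrix hA.1 hB.1 K i j)
  refine ⟨Z, ?_⟩
  rw [quadratic_eq_sum hA.1 hB.1, hZ]
  exact Finset.sum_congr rfl fun i _ => Finset.sum_congr rfl fun j _ =>
    normSq_mul_parallel_eq (hA.eigenvalues_nonneg i) (hB.eigenvalues_nonneg j) ht _

theorem trRe_add {n : ℕ} (M N : Matrix (Fin n) (Fin n) ℂ) : trRe (M + N) = trRe M + trRe N := by
  simp [trRe]

theorem trRe_smul {n : ℕ} (s : ℝ) (M : Matrix (Fin n) (Fin n) ℂ) :
    trRe (s • M) = s * trRe M := by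
  simp [trRe, trace_smul]

theorem posSemidef_convexComb {n : ℕ} {A₁ A₂ : Matrix (Fin n) (Fin n) ℂ}
    (hA₁ : A₁.PosSemidef) (hA₂ : A₂.PosSemidef) {s : ℝ} (hs : s ∈ Set.Icc (0 : ℝ) 1) :
    (s • A₁ + (1 - s) • A₂).PosSemidef :=
  (hA₁.smul hs.1).add (hA₂.smul (sub_nonneg.mpr hs.2))

theorem parallelForm_concave {n : ℕ} {A₁ A₂ B₁ B₂ : Matrix (Fin n) (Fin n) ℂ}
    (hA₁ : A₁.PosSemidef) (hA₂ : A₂.PosSemidef) (hB₁ : B₁.PosSemidef) (hB₂ : B₂.PosSemidef)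
    (K : Matrix (Fin n) (Fin n) ℂ) {s : ℝ} (hs : s ∈ Set.Icc (0 : ℝ) 1) {t : ℝ} (ht : 0 < t) :
    s * parallelForm hA₁.1 hB₁.1 K t + (1 - s) * parallelForm hA₂.1 hB₂.1 K t ≤
      parallelForm (posSemidef_convexComb hA₁ hA₂ hs).1 (posSemidef_convexComb hB₁ hB₂ hs).1 K t := by
  obtain ⟨Z, hZ⟩ := exists_parallelForm_eq (posSemidef_convexComb hA₁ hA₂ hs)
    (posSemidef_convexComb hB₁ hB₂ hs) K ht
  have h₁ := mul_le_mul_of_nonneg_left (parallelForm_le hA₁ hB₁ K Z ht) hs.1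
  have h₂ := mul_le_mul_of_nonneg_left (parallelForm_le hA₂ hB₂ K Z ht) (sub_nonneg.mpr hs.2)
  rw [hZ]
  simp only [mul_add, add_mul, mul_smul_comm, smul_mul_assoc, trRe_add, trRe_smul]
  linarith

/-- Integral representation of `a ^ p * b ^ (1 - p)` by parallel sums. -/
theorem rpow_mul_rpow_integral {p : ℝ} (hp : p ∈ Set.Ioo (0 : ℝ) 1) {a b : ℝ}
    (ha : 0 ≤ a) (hb : 0 ≤ b) :
    IntegrableOn (fun t : ℝ => t ^ (p - 1) * (a * b / (a + t * b))) (Set.Ioi 0) ∧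
    a ^ p * b ^ (1 - p) = (∫ t in Set.Ioi 0, Real.rpowIntegrand₀₁ p t 1)⁻¹ *
      ∫ t in Set.Ioi 0, t ^ (p - 1) * (a * b / (a + t * b)) := by
  rcases hb.eq_or_lt with rfl | hb
  · simp [Real.zero_rpow (sub_pos.mpr hp.2).ne']
  have hab : 0 ≤ a / b := by positivity
  have heq : Set.EqOn (fun t : ℝ => b * Real.rpowIntegrand₀₁ p t (a / b))
      (fun t : ℝ => t ^ (p - 1) * (a * b / (a + t * b))) (Set.Ioi 0) := by
    intro t ht
    have ht : 0 < t := ht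
    simp only
    rw [Real.rpowIntegrand₀₁_eq_pow_div hp ht.le hab]
    have : t + a / b = (a + t * b) / b := by field_simp; ring
    have h0 : 0 < a + t * b := by positivity
    rw [this]
    field_simp
  constructor
  · exact IntegrableOn.congr_fun ((Real.integrableOn_rpowIntegrand₀₁_Ioi hp hab).const_mul b)
      heq measurableSet_Ioi
  · rw [← setIntegral_congr_fun measurableSet_Ioi heq, integral_const_mul, mul_left_comm,
      ← Real.rpow_eq_const_mul_integral hp hab, Real.div_rpow ha hb.le, Real.rpow_sub hb,
      Real.rpow_one]
    ring

theorem trRe_mpow_integral {n : ℕ} {p : ℝ} (hp : p ∈ Set.Ioo (0 : ℝ) 1)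
    {A B : Matrix (Fin n) (Fin n) ℂ} (hA : A.PosSemidef) (hB : B.PosSemidef)
    (K : Matrix (Fin n) (Fin n) ℂ) :
    IntegrableOn (fun t : ℝ => t ^ (p - 1) * parallelForm hA.1 hB.1 K t) (Set.Ioi 0) ∧
    trRe (Kᴴ * mpow A p * K * mpow B (1 - p)) =
      (∫ t in Set.Ioi 0, Real.rpowIntegrand₀₁ p t 1)⁻¹ *
        ∫ t in Set.Ioi 0, t ^ (p - 1) * parallelForm hA.1 hB.1 K t := by
  have h := fun i j => rpow_mul_rpow_integral hp (hA.eigenvalues_nonneg i)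
    (hB.eigenvalues_nonneg j)
  have hint := fun i j => (h i j).1.const_mul
    (Complex.normSq (eigenbasisMatrix hA.1 hB.1 K i j))
  have hform : (fun t : ℝ => t ^ (p - 1) * parallelForm hA.1 hB.1 K t) = fun t =>
      ∑ i, ∑ j, Complex.normSq (eigenbasisMatrix hA.1 hB.1 K i j) * (t ^ (p - 1) *
        (hA.1.eigenvalues i * hB.1.eigenvalues j /
          (hA.1.eigenvalues i + t * hB.1.eigenvalues j))) := by
    funext t
    simp only [parallelForm, Finset.mul_sum]
    exact Finset.sum_congr rfl fun i _ => Finset.sum_congr rfl fun j _ => mul_left_comm _ _ _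
  rw [hform]
  constructor
  · exact integrable_finsetSum _ fun i _ => integrable_finsetSum _ fun j _ => hint i j
  · rw [integral_finsetSum _ fun i _ => integrable_finsetSum _ fun j _ => hint i j,
      mpow, mpow, trRe_conjTranspose_cfc_mul_cfc hA.1 hB.1, Finset.mul_sum]
    refine Finset.sum_congr rfl fun i _ => ?_
    rw [integral_finsetSum _ fun j _ => hint i j, Finset.mul_sum]
    refine Finset.sum_congr rfl fun j _ => ?_
    rw [integral_const_mul, (h i j).2]
    ring

theorem mpow_one {n : ℕ} {A : Matrix (Fin n) (Fin n) ℂ} (hA : A.IsHermitian) :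
    mpow A 1 = A := by
  have hA' : IsSelfAdjoint A := hA
  simp only [mpow, Real.rpow_one]
  exact cfc_id' ℝ A

theorem mpow_zero {n : ℕ} {A : Matrix (Fin n) (Fin n) ℂ} (hA : A.IsHermitian) :
    mpow A 0 = 1 := by
  have hA' : IsSelfAdjoint A := hA
  simp only [mpow, Real.rpow_zero]
  exact cfc_const_one ℝ A

/-- **Lieb's concavity theorem**. -/
theorem lieb_concavity {n : ℕ} {p : ℝ} (hp : p ∈ Set.Ioc (0 : ℝ) 1)
    {A₁ A₂ B₁ B₂ : Matrix (Fin n) (Fin n) ℂ}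
    (hA₁ : A₁.PosSemidef) (hA₂ : A₂.PosSemidef) (hB₁ : B₁.PosSemidef) (hB₂ : B₂.PosSemidef)
    (K : Matrix (Fin n) (Fin n) ℂ) {s : ℝ} (hs : s ∈ Set.Icc (0 : ℝ) 1) :
    s * trRe (Kᴴ * mpow A₁ p * K * mpow B₁ (1 - p)) +
        (1 - s) * trRe (Kᴴ * mpow A₂ p * K * mpow B₂ (1 - p)) ≤
      trRe (Kᴴ * mpow (s • A₁ + (1 - s) • A₂) p * K *
        mpow (s • B₁ + (1 - s) • B₂) (1 - p)) := by
  have hA := posSemidef_convexComb hA₁ hA₂ hs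
  have hB := posSemidef_convexComb hB₁ hB₂ hs
  rcases hp.2.eq_or_lt with rfl | hp1
  · simp only [sub_self, mpow_one hA₁.1, mpow_one hA₂.1, mpow_one hA.1, mpow_zero hB₁.1,
      mpow_zero hB₂.1, mpow_zero hB.1, mul_one, mul_add, add_mul, mul_smul_comm, smul_mul_assoc,
      trRe_add, trRe_smul, le_refl]
  have hp' : p ∈ Set.Ioo (0 : ℝ) 1 := ⟨hp.1, hp1⟩
  obtain ⟨i₁, e₁⟩ := trRe_mpow_integral hp' hA₁ hB₁ K
  obtain ⟨i₂, e₂⟩ := trRe_mpow_integral hp' hA₂ hB₂ K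
  obtain ⟨i, e⟩ := trRe_mpow_integral hp' hA hB K
  rw [e₁, e₂, e, mul_left_comm, mul_left_comm (1 - s), ← mul_add, ← integral_const_mul,
    ← integral_const_mul, ← integral_add (i₁.const_mul s) (i₂.const_mul (1 - s))]
  refine mul_le_mul_of_nonneg_left ?_ (inv_nonneg.mpr (Real.integral_rpowIntegrand₀₁_one_pos hp').le)
  refine setIntegral_mono_on ((i₁.const_mul s).add (i₂.const_mul (1 - s))) i measurableSet_Ioi
    fun t ht => ?_
  have := mul_le_mul_of_nonneg_left (parallelForm_concave hA₁ hA₂ hB₁ hB₂ K hs ht)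
    (Real.rpow_nonneg (le_of_lt ht) (p - 1))
  linarith

theorem posSemidef_mpow {n : ℕ} {A : Matrix (Fin n) (Fin n) ℂ} (hA : A.PosSemidef) (p : ℝ) :
    (mpow A p).PosSemidef := by
  open scoped MatrixOrder in
  rw [← nonneg_iff_posSemidef]
  exact cfc_nonneg fun x hx => Real.rpow_nonneg (spectrum_nonneg_of_nonneg hA.nonneg hx) p

/-- **Young's inequality** under the trace. -/
theorem trRe_mul_mpow_le {n : ℕ} {p : ℝ} (hp : p ∈ Set.Ioc (0 : ℝ) 1)
    {X Y : Matrix (Fin n) (Fin n) ℂ} (hX : X.PosSemidef) (hY : Y.PosSemidef) :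
    trRe (X * mpow Y (1 - p)) ≤ p * trRe (mpow X (1 / p)) + (1 - p) * trRe Y := by
  have h := trRe_conjTranspose_cfc_mul_cfc hX.1 hY.1 1
  have h₁ := h (fun x => x) (fun y => y ^ (1 - p))
  have h₂ := h (fun x => x ^ (1 / p)) (fun _ => 1)
  have h₃ := h (fun _ => 1) (fun y => y)
  have hX' : IsSelfAdjoint X := hX.1
  have hY' : IsSelfAdjoint Y := hY.1
  rw [cfc_id' ℝ X] at h₁
  rw [cfc_const_one ℝ Y] at h₂
  rw [cfc_const_one ℝ X, cfc_id' ℝ Y] at h₃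
  simp only [conjTranspose_one, one_mul, mul_one] at h₁ h₂ h₃
  rw [mpow, mpow, h₁, h₂, h₃]
  simp only [Finset.mul_sum, ← Finset.sum_add_distrib]
  refine Finset.sum_le_sum fun i _ => Finset.sum_le_sum fun j _ => ?_
  have hx := hX.eigenvalues_nonneg i
  have young := Real.geom_mean_le_arith_mean2_weighted hp.1.le (sub_nonneg.mpr hp.2)
    (Real.rpow_nonneg hx (1 / p)) (hY.eigenvalues_nonneg j) (by ring)
  rw [← Real.rpow_mul hx, one_div_mul_cancel hp.1.ne', Real.rpow_one] at young
  have := mul_le_mul_of_nonneg_left young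
    (Complex.normSq_nonneg (eigenbasisMatrix hX.1 hY.1 1 i j))
  linarith

theorem mul_mpow_mpow {n : ℕ} {p : ℝ} (hp : p ∈ Set.Ioc (0 : ℝ) 1)
    {X : Matrix (Fin n) (Fin n) ℂ} (hX : X.PosSemidef) :
    X * mpow (mpow X (1 / p)) (1 - p) = mpow X (1 / p) := by
  have hX' : IsSelfAdjoint X := hX.1
  have hc : ∀ f : ℝ → ℝ, ContinuousOn f (spectrum ℝ X) := fun f =>
    (finite_real_spectrum (A := X)).continuousOn f
  have hc' : ∀ f g : ℝ → ℝ, ContinuousOn f (g '' spectrum ℝ X) := fun f g =>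
    ((finite_real_spectrum (A := X)).image g).continuousOn f
  simp only [mpow]
  rw [← cfc_comp' _ _ X (hc' _ _) (hc _)]
  conv_lhs => enter [1]; rw [← cfc_id' ℝ X]
  rw [← cfc_mul _ _ X (hc _) (hc _)]
  refine cfc_congr fun x hx => ?_
  have hx0 : 0 ≤ x := by
    open scoped MatrixOrder in
    exact spectrum_nonneg_of_nonneg hX.nonneg hx
  rcases hx0.eq_or_lt with rfl | hx0
  · rw [zero_mul, Real.zero_rpow (one_div_pos.mpr hp.1).ne']
  · rw [← Real.rpow_mul hx0.le]
    nth_rw 1 [← Real.rpow_one x]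
    rw [← Real.rpow_add hx0]
    congr 1
    have := hp.1.ne'
    field_simp
    ring

/-- Epstein-type concavity with an additive positive semidefinite term. -/
theorem trRe_mpow_add_conj_concave {n : ℕ} {p : ℝ} (hp : p ∈ Set.Ioc (0 : ℝ) 1)
    {C : Matrix (Fin n) (Fin n) ℂ} (hC : C.PosSemidef) (H : Matrix (Fin n) (Fin n) ℂ)
    {A₁ A₂ : Matrix (Fin n) (Fin n) ℂ} (hA₁ : A₁.PosSemidef) (hA₂ : A₂.PosSemidef)
    {s : ℝ} (hs : s ∈ Set.Icc (0 : ℝ) 1) :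
    s * trRe (mpow (C + Hᴴ * mpow A₁ p * H) (1 / p)) +
        (1 - s) * trRe (mpow (C + Hᴴ * mpow A₂ p * H) (1 / p)) ≤
      trRe (mpow (C + Hᴴ * mpow (s • A₁ + (1 - s) • A₂) p * H) (1 / p)) := by
  have hX : ∀ {A : Matrix (Fin n) (Fin n) ℂ}, A.PosSemidef →
      (C + Hᴴ * mpow A p * H).PosSemidef := fun hA =>
    hC.add ((posSemidef_mpow hA p).conjTranspose_mul_mul_same H)
  obtain ⟨D, hD⟩ : ∃ D, C = Dᴴ * D := by
    open scoped MatrixOrder in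
    exact CStarAlgebra.nonneg_iff_eq_star_mul_self.mp hC.nonneg
  have hone : mpow (1 : Matrix (Fin n) (Fin n) ℂ) p = 1 := by
    rw [mpow, cfc_apply_one, Real.one_rpow, map_one]
  have hC_eq : Dᴴ * mpow 1 p * D = C := by rw [hone, mul_one, hD]
  have hone_comb : s • (1 : Matrix (Fin n) (Fin n) ℂ) + (1 - s) • 1 = 1 := by
    rw [← add_smul, add_sub_cancel, one_smul]
  have hY₁ := posSemidef_mpow (hX hA₁) (1 / p)
  have hY₂ := posSemidef_mpow (hX hA₂) (1 / p)
  have young := trRe_mul_mpow_le hp (hX (posSemidef_convexComb hA₁ hA₂ hs))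
    (posSemidef_convexComb hY₁ hY₂ hs)
  have liebC := lieb_concavity hp PosSemidef.one PosSemidef.one hY₁ hY₂ D hs
  have liebA := lieb_concavity hp hA₁ hA₂ hY₁ hY₂ H hs
  have e₁ := congrArg trRe (mul_mpow_mpow hp (hX hA₁))
  have e₂ := congrArg trRe (mul_mpow_mpow hp (hX hA₂))
  rw [hone_comb, hC_eq] at liebC
  rw [add_mul, trRe_add] at e₁ e₂
  rw [add_mul, trRe_add, trRe_add, trRe_smul, trRe_smul] at young
  refine le_of_mul_le_mul_left ?_ hp.1
  linear_combination young + liebC + liebA - s * e₁ - (1 - s) * e₂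

/-- Concavity of φ_q on positive definite matrices for q ∈ (1,2]. -/
theorem stmt6 {n : ℕ} (q : ℝ) (hq : q ∈ Set.Ioc (1 : ℝ) 2)
    (H L : Matrix (Fin n) (Fin n) ℂ) (hH : (1 - Hᴴ * H).PosSemidef)
    (hL : L.IsHermitian) (hpos : (1 - Hᴴ * H + (q - 1) • L).PosSemidef)
    (A₁ A₂ : Matrix (Fin n) (Fin n) ℂ) (hA₁ : A₁.PosDef) (hA₂ : A₂.PosDef)
    (t : ℝ) (ht : t ∈ Set.Icc (0 : ℝ) 1) :
    phiq q H L (t • A₁ + (1 - t) • A₂) ≥ t * phiq q H L A₁ + (1 - t) * phiq q H L A₂ := by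

  exact trRe_mpow_add_conj_concave ⟨sub_pos.mpr hq.1, by linarith [hq.2]⟩ hpos H
    hA₁.posSemidef hA₂.posSemidef ht
end
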